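/- Let n ≥ 3 and let β, μ be multi-indices with |β| = |μ| + 1. Then the function x ↦ ∫_{∂B_R} D^β_x Γ(x−y) (y−x)^μ ν_j dσ(y) is constant on B_R, where ν_j is the j-th component of the outward unit normal of the sphere ∂B_R. -/

import Mathlib

open MeasureTheory Metric

noncomputable section

def sphArea (n : ℕ) : ℝ :=
  (μH[(n : ℝ) - 1] (sphere (0 : EuclideanSpace ℝ (Fin n)) 1)).toReal

def fundSol (n : ℕ) (x : EuclideanSpace ℝ (Fin n)) : ℝ :=
  (1 / (n * (2 - (n : ℝ)) * sphArea n)) * ‖x‖ ^ ((2 : ℝ) - n)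

def ee {n : ℕ} (i : Fin n) : EuclideanSpace ℝ (Fin n) := EuclideanSpace.single i 1

/-!
The kernel `K z = D^β Γ (-z) * z ^ μ` is odd and homogeneous of degree `1 - n`. For `x` inside the
unit sphere, project the sphere centrally from `x` to the directions `θ = (u - x) / ‖u - x‖`. With
respect to the surface measure, the integral of `K (u - x) * ⟪e, u⟫` becomes the integral of
`K θ * ⟪e, u⟫ / ⟪u, θ⟫`. Writing `u = x + t • θ`, one finds
`t = √(⟪x, θ⟫² + 1 - ‖x‖²) - ⟪x, θ⟫`, so that `⟪e, u⟫ / ⟪u, θ⟫` is `⟪e, θ⟫` plus an even function of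
`θ`. The dependence on `x` sits in the even function, whose product with `K` integrates to zero.

The Jacobian of the central projection is that of the map `y ↦ y - ‖y‖ • x`, which commutes with
positive scalars and whose derivative is a rank one perturbation of the identity. This is a
statement about the cone measure of the sphere. It carries over to the Hausdorff measure because a
finite rotation invariant measure on a sphere is unique up to a factor: exchanging the order of
integration in the pairing `∬ exp (i c ⟪x, y⟫)` of two such measures shows that their
characteristic functions are proportional.
-/

section

open Module NormedSpace Set
open scoped ENNReal RealInnerProductSpace

variable {E : Type*} [NormedAddCommGroup E] [InnerProductSpace ℝ E]

section HausdorffMeasure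

theorem mem_image_stereoInvFunAux_closedBall {u v : E} (hu : ‖u‖ = 1) (hv : ‖v‖ = 1)
    (huv : ⟪v, u⟫ ≤ 0) :
    u ∈ (fun w : (ℝ ∙ v)ᗮ => stereoInvFunAux v (w : E)) '' closedBall 0 2 := by
  have hne : u ≠ v := by
    rintro rfl
    norm_num [real_inner_self_eq_norm_sq, hv] at huv
  have hproj : ‖(ℝ ∙ v)ᗮ.orthogonalProjectionOnto u‖ ≤ 1 := by
    simpa [hu] using (ℝ ∙ v)ᗮ.norm_orthogonalProjectionOnto_apply_le u
  have hscale : ‖2 / (1 - ⟪v, u⟫)‖ ≤ 2 := by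
    rw [Real.norm_of_nonneg (div_nonneg zero_le_two (by linarith)), div_le_iff₀ (by linarith)]
    linarith
  refine ⟨stereoToFun v u, ?_,
    congrArg Subtype.val (stereo_left_inv hv (x := ⟨u, by simp [hu]⟩) hne)⟩
  rw [mem_closedBall_zero_iff, stereoToFun_apply, norm_smul, innerSL_apply_apply]
  calc ‖2 / (1 - ⟪v, u⟫)‖ * ‖(ℝ ∙ v)ᗮ.orthogonalProjectionOnto u‖
      ≤ 2 * 1 := by gcongr
    _ = 2 := mul_one 2

variable [MeasurableSpace E] [BorelSpace E] [FiniteDimensional ℝ E]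

theorem hausdorffMeasure_finrank_image_lt_top {F : Type*} [NormedAddCommGroup F]
    [NormedSpace ℝ F] [MeasurableSpace F] [BorelSpace F] {f : E → F} (hf : ContDiff ℝ 1 f)
    {s : Set E} (hs : IsCompact s) : μH[finrank ℝ E] (f '' s) < ∞ := by
  obtain ⟨C, hC⟩ := LocallyLipschitzOn.exists_lipschitzOnWith_of_compact hs
    hf.locallyLipschitz.locallyLipschitzOn
  exact (hC.hausdorffMeasure_image_le (by positivity)).trans_lt
    (ENNReal.mul_lt_top (by simp) hs.measure_lt_top)

theorem hausdorffMeasure_hemisphere_lt_top {v : E} (hv : ‖v‖ = 1) :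
    μH[(finrank ℝ E : ℝ) - 1] {u : E | ‖u‖ = 1 ∧ ⟪v, u⟫ ≤ 0} < ∞ := by
  have hdim : (finrank ℝ (ℝ ∙ v)ᗮ : ℝ) = finrank ℝ E - 1 := by
    rw [← (ℝ ∙ v).finrank_add_finrank_orthogonal,
      finrank_span_singleton (norm_ne_zero_iff.1 (hv.trans_ne one_ne_zero))]
    push_cast
    ring
  have hsmooth : ContDiff ℝ 1 fun w : (ℝ ∙ v)ᗮ => stereoInvFunAux v (w : E) :=
    contDiff_stereoInvFunAux.comp (ℝ ∙ v)ᗮ.subtypeL.contDiff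
  have himage := hausdorffMeasure_finrank_image_lt_top hsmooth (isCompact_closedBall 0 2)
  rw [hdim] at himage
  exact (measure_mono fun u hu => mem_image_stereoInvFunAux_closedBall hu.1 hv hu.2).trans_lt
    himage

theorem hausdorffMeasure_sphere_lt_top [Nontrivial E] (R : ℝ) :
    μH[(finrank ℝ E : ℝ) - 1] (sphere (0 : E) R) < ∞ := by
  obtain ⟨v, hv⟩ := exists_norm_eq E zero_le_one
  have hunit : μH[(finrank ℝ E : ℝ) - 1] (sphere (0 : E) 1) < ∞ := by
    refine (measure_mono fun u hu => ?_).trans_lt (measure_union_lt_top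
      (hausdorffMeasure_hemisphere_lt_top hv)
      (hausdorffMeasure_hemisphere_lt_top ((norm_neg v).trans hv)))
    have hu : ‖u‖ = 1 := mem_sphere_zero_iff_norm.1 hu
    rcases le_total ⟪v, u⟫ 0 with h | h
    · exact Or.inl ⟨hu, h⟩
    · exact Or.inr ⟨hu, by simpa only [inner_neg_left, neg_nonpos] using h⟩
  rcases lt_or_ge R 0 with hR | hR
  · simp only [sphere_eq_empty_of_neg hR, measure_empty, ENNReal.zero_lt_top]
  · have hdim : (0 : ℝ) ≤ finrank ℝ E - 1 := sub_nonneg.2 (Nat.one_le_cast.2 finrank_pos)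
    have hsphere : (fun y : E => R • y) '' sphere 0 1 = sphere 0 R := by
      rw [image_smul, smul_sphere R 0 zero_le_one, smul_zero, mul_one, Real.norm_of_nonneg hR]
    rw [← hsphere]
    exact ((lipschitzWith_smul R).hausdorffMeasure_image_le hdim _).trans_lt
      (ENNReal.mul_lt_top (ENNReal.rpow_lt_top_of_nonneg hdim ENNReal.coe_ne_top) hunit)

end HausdorffMeasure

section RotationInvariance

variable [MeasurableSpace E]

/-- A measure on `E` is rotation invariant if every linear isometry of `E` onto itself, including
the orientation reversing ones, preserves it. -/
def IsRotationInvariant (σ : Measure E) : Prop :=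
  ∀ L : E ≃ₗᵢ[ℝ] E, MeasurePreserving L σ σ

variable [BorelSpace E]

theorem isRotationInvariant_hausdorffMeasure_restrict_sphere (d R : ℝ) :
    IsRotationInvariant (μH[d].restrict (sphere (0 : E) R)) := fun L => by
  have hL := (L.toIsometryEquiv.measurePreserving_hausdorffMeasure d).restrict_preimage
    (isClosed_sphere (x := (0 : E)) (ε := R)).measurableSet
  have hsphere : L.toIsometryEquiv ⁻¹' sphere 0 R = sphere (0 : E) R := by
    ext y
    simp only [mem_preimage, mem_sphere_zero_iff_norm, LinearIsometryEquiv.coe_toIsometryEquiv,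
      LinearIsometryEquiv.norm_map]
  rwa [hsphere] at hL

theorem integral_charFun_smul_comm [FiniteDimensional ℝ E] (σ τ : Measure E)
    [IsFiniteMeasure σ] [IsFiniteMeasure τ] (c : ℝ) :
    ∫ y, charFun σ (c • y) ∂τ = ∫ x, charFun τ (c • x) ∂σ := by
  simp only [charFun_apply]
  rw [integral_integral_swap]
  · simp only [inner_smul_right, real_inner_comm]
  · refine Integrable.of_bound (C := 1) (Continuous.aestronglyMeasurable ?_)
      (.of_forall fun p => (Complex.norm_exp_ofReal_mul_I _).le)
    unfold Function.uncurry
    fun_prop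

namespace IsRotationInvariant

variable {σ τ : Measure E}

theorem integral_eq_zero_of_odd {f : E → ℝ} (hσ : IsRotationInvariant σ)
    (hf : ∀ᵐ u ∂σ, f (-u) = -f u) : ∫ u, f u ∂σ = 0 := by
  let neg : E ≃ₗᵢ[ℝ] E := LinearIsometryEquiv.neg ℝ
  have hneg : ∫ u, f (-u) ∂σ = ∫ u, f u ∂σ :=
    (hσ neg).integral_comp neg.toHomeomorph.measurableEmbedding f
  rw [integral_congr_ae hf, integral_neg] at hneg
  linarith

theorem map_smul (hσ : IsRotationInvariant σ) (c : ℝ) :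
    IsRotationInvariant (σ.map (c • ·)) := by
  have hc : Measurable fun y : E => c • y := (continuous_const_smul c).measurable
  intro L
  refine ⟨L.continuous.measurable, ?_⟩
  rw [Measure.map_map L.continuous.measurable hc]
  conv_rhs => rw [← (hσ L).map_eq, Measure.map_map hc L.continuous.measurable]
  congr 1
  ext y
  exact L.map_smul c y

theorem charFun_eq_of_norm_eq (hσ : IsRotationInvariant σ) {a b : E} (hab : ‖a‖ = ‖b‖) :
    charFun σ a = charFun σ b := by
  let L : E ≃ₗᵢ[ℝ] E := (ℝ ∙ (a - b))ᗮ.reflection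
  have hL : L a = b := Submodule.reflection_sub hab
  rw [← hL, charFun_apply, charFun_apply]
  simpa only [LinearIsometryEquiv.inner_map_map] using
    (hσ L).integral_comp L.toHomeomorph.measurableEmbedding
      fun x => Complex.exp (⟪x, L a⟫ * Complex.I)

/-- The characteristic function of a rotation invariant measure is radial, so averaging
`charFun σ` over the support of `τ` returns a single value of it. -/
theorem integral_charFun_smul_eq (hσ : IsRotationInvariant σ) {R : ℝ}
    (hR : 0 < R) (hτR : ∀ᵐ y ∂τ, ‖y‖ = R) (t : E) :
    ∫ y, charFun σ ((‖t‖ / R) • y) ∂τ = τ.real univ • charFun σ t := by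
  rw [← integral_const]
  refine integral_congr_ae (hτR.mono fun y hy => hσ.charFun_eq_of_norm_eq ?_)
  rw [norm_smul, hy, norm_div, norm_norm, Real.norm_of_nonneg hR.le, div_mul_cancel₀ _ hR.ne']

theorem measure_univ_smul_eq [FiniteDimensional ℝ E] [IsFiniteMeasure σ] [IsFiniteMeasure τ]
    (hσ : IsRotationInvariant σ) (hτ : IsRotationInvariant τ) {R : ℝ} (hR : 0 < R)
    (hσR : ∀ᵐ x ∂σ, ‖x‖ = R) (hτR : ∀ᵐ x ∂τ, ‖x‖ = R) : τ univ • σ = σ univ • τ := by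
  have : IsFiniteMeasure (τ univ • σ) := Measure.smul_finite σ (measure_ne_top τ univ)
  have : IsFiniteMeasure (σ univ • τ) := Measure.smul_finite τ (measure_ne_top σ univ)
  refine Measure.ext_of_charFun (funext fun t => ?_)
  have hswap := integral_charFun_smul_comm σ τ (‖t‖ / R)
  rw [hσ.integral_charFun_smul_eq hR hτR, hτ.integral_charFun_smul_eq hR hσR] at hswap
  simpa only [charFun_apply, integral_smul_measure, measureReal_def] using hswap

theorem exists_eq_smul [FiniteDimensional ℝ E] [IsFiniteMeasure σ] [IsFiniteMeasure τ]
    (hσ : IsRotationInvariant σ) (hτ : IsRotationInvariant τ) {R : ℝ} (hR : 0 < R)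
    (hσR : ∀ᵐ x ∂σ, ‖x‖ = R) (hτR : ∀ᵐ x ∂τ, ‖x‖ = R) (hτ0 : τ univ ≠ 0) :
    ∃ C : ℝ≥0∞, σ = C • τ :=
  ⟨(τ univ)⁻¹ * σ univ, by
    rw [mul_smul, ← hσ.measure_univ_smul_eq hτ hR hσR hτR, smul_smul,
      ENNReal.inv_mul_cancel hτ0 (measure_ne_top τ univ), one_smul]⟩

end IsRotationInvariant

end RotationInvariance

section PolarCoordinates

variable {F : Type*} [NormedAddCommGroup F] [NormedSpace ℝ F] [FiniteDimensional ℝ F]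
  [Nontrivial F] [MeasurableSpace F] [BorelSpace F] (μ : Measure F) [μ.IsAddHaarMeasure]

theorem lintegral_eq_lintegral_toSphere_lintegral_Ioi {f : F → ℝ≥0∞} (hf : Measurable f) :
    ∫⁻ z, f z ∂μ = ∫⁻ u : sphere (0 : F) 1, ∫⁻ r : Ioi (0 : ℝ), f (r.1 • u.1)
      ∂(Measure.volumeIoiPow (finrank ℝ F - 1)) ∂μ.toSphere := by
  have hpolar : Measurable fun p : sphere (0 : F) 1 × Ioi (0 : ℝ) => f (p.2.1 • p.1.1) :=
    hf.comp (by fun_prop)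
  rw [← lintegral_prod _ hpolar.aemeasurable,
    ← μ.measurePreserving_homeomorphUnitSphereProd.lintegral_comp hpolar,
    ← lintegral_add_compl f (measurableSet_singleton (0 : F)),
    setLIntegral_measure_zero _ _ (measure_singleton 0),
    zero_add, ← lintegral_subtype_comap (measurableSet_singleton (0 : F)).compl]
  refine lintegral_congr fun z => ?_
  simp only [homeomorphUnitSphereProd_apply_snd_coe, homeomorphUnitSphereProd_apply_fst_coe,
    smul_inv_smul₀ (norm_ne_zero_iff.2 z.2)]

theorem setLIntegral_lt_one_eq_lintegral_toSphere {g : F → ℝ≥0∞} {a : F → ℝ}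
    (hg : Measurable g) (ha : Measurable a) (hg_smul : ∀ r : ℝ, 0 < r → ∀ z, g (r • z) = g z)
    (ha_smul : ∀ r : ℝ, 0 < r → ∀ z, a (r • z) = r * a z) (ha_pos : ∀ z ≠ 0, 0 < a z) :
    ∫⁻ z in {z | a z < 1}, g z ∂μ = ∫⁻ u : sphere (0 : F) 1,
      g u * ENNReal.ofReal ((a u)⁻¹ ^ finrank ℝ F / finrank ℝ F) ∂μ.toSphere := by
  have hlt : MeasurableSet {z | a z < 1} := measurableSet_lt ha measurable_const
  rw [← lintegral_indicator hlt,
    lintegral_eq_lintegral_toSphere_lintegral_Ioi μ (hg.indicator hlt)]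
  refine lintegral_congr fun u => ?_
  have hau : 0 < a u := ha_pos u (ne_zero_of_mem_unit_sphere u)
  let b : Ioi (0 : ℝ) := ⟨(a u)⁻¹, inv_pos.2 hau⟩
  have hray : ∀ r : Ioi (0 : ℝ), {z | a z < 1}.indicator g (r.1 • u.1) =
      (Iio b).indicator (fun _ => g u) r := fun r => by
    have hmem : r.1 • u.1 ∈ {z | a z < 1} ↔ r ∈ Iio b := by
      rw [mem_ofPred_eq, ha_smul r r.2, ← lt_div_iff₀ hau, one_div]
      rfl
    simp only [indicator_apply, hmem, hg_smul r r.2]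
  have hvolume := Measure.volumeIoiPow_apply_Iio (finrank ℝ F - 1) b
  rw [← Nat.cast_add_one, Nat.sub_add_cancel finrank_pos] at hvolume
  rw [lintegral_congr hray, lintegral_indicator_const measurableSet_Iio, hvolume]

end PolarCoordinates

section ConeMeasure

variable [MeasurableSpace E] [BorelSpace E]

theorem measurable_normalize : Measurable (normalize : E → E) := by
  unfold NormedSpace.normalize
  fun_prop

variable [FiniteDimensional ℝ E]

variable (E) in
/-- The cone measure of the unit sphere: a set of unit vectors is given the volume of the part of
the unit ball lying over it. This is the surface measure divided by the dimension, regarded as a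
measure on the ambient space. -/
def coneMeasure : Measure E :=
  (volume.restrict (ball 0 1)).map normalize

instance : IsFiniteMeasure (coneMeasure E) := by
  have : Fact (volume (ball (0 : E) 1) < ∞) := ⟨measure_ball_lt_top⟩
  unfold coneMeasure
  infer_instance

theorem coneMeasure_univ_ne_zero : coneMeasure E univ ≠ 0 := by
  rw [coneMeasure, Measure.map_apply measurable_normalize .univ, preimage_univ,
    Measure.restrict_apply_univ]
  exact (measure_ball_pos volume 0 one_pos).ne'

theorem lintegral_coneMeasure {φ : E → ℝ≥0∞} (hφ : Measurable φ) :
    ∫⁻ u, φ u ∂coneMeasure E = ∫⁻ z in {z | ‖z‖ < 1}, φ (normalize z) := by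
  rw [coneMeasure, lintegral_map hφ measurable_normalize]
  congr 2
  ext z
  exact mem_ball_zero_iff

theorem isRotationInvariant_coneMeasure : IsRotationInvariant (coneMeasure E) := fun L => by
  have hball : L ⁻¹' ball 0 1 = ball (0 : E) 1 := by
    rw [L.preimage_ball, map_zero]
  have hL := L.measurePreserving.restrict_preimage (measurableSet_ball (x := (0 : E)) (ε := 1))
  rw [hball] at hL
  refine ⟨L.continuous.measurable, ?_⟩
  rw [coneMeasure, Measure.map_map L.continuous.measurable measurable_normalize]
  conv_rhs => rw [← hL.map_eq, Measure.map_map measurable_normalize L.continuous.measurable]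
  congr 1
  ext z
  simp only [Function.comp_apply, NormedSpace.normalize, LinearIsometryEquiv.map_smul,
    LinearIsometryEquiv.norm_map]

variable [Nontrivial E]

theorem ae_norm_eq_one_coneMeasure : ∀ᵐ u ∂coneMeasure E, ‖u‖ = 1 := by
  rw [coneMeasure, ae_map_iff measurable_normalize.aemeasurable
    (measurableSet_eq_fun measurable_norm measurable_const)]
  exact ae_restrict_of_ae ((ae_iff.2 (by simp)).mono fun z hz => norm_normalize_eq_one_iff.2 hz)

theorem lintegral_coneMeasure_eq_lintegral_toSphere {φ : E → ℝ≥0∞} (hφ : Measurable φ) :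
    ∫⁻ u, φ u ∂coneMeasure E =
      ∫⁻ u : sphere (0 : E) 1, φ u * ENNReal.ofReal (1 / finrank ℝ E) ∂volume.toSphere := by
  rw [lintegral_coneMeasure hφ, setLIntegral_lt_one_eq_lintegral_toSphere volume
    (g := fun z => φ (NormedSpace.normalize z))
    (hφ.comp measurable_normalize) measurable_norm
    (fun r hr z => congrArg φ (normalize_smul_of_pos hr z))
    (fun r hr z => by rw [norm_smul, Real.norm_of_nonneg hr.le]) fun z hz => norm_pos_iff.2 hz]
  refine lintegral_congr fun u => ?_
  have hu : ‖(u : E)‖ = 1 := norm_eq_of_mem_sphere u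
  rw [normalize_eq_self_of_norm_eq_one hu, hu, inv_one, one_pow]

theorem setLIntegral_lt_one_eq_lintegral_coneMeasure {g : E → ℝ≥0∞} {a : E → ℝ}
    (hg : Measurable g) (ha : Measurable a) (hg_smul : ∀ r : ℝ, 0 < r → ∀ z, g (r • z) = g z)
    (ha_smul : ∀ r : ℝ, 0 < r → ∀ z, a (r • z) = r * a z) (ha_pos : ∀ z ≠ 0, 0 < a z) :
    ∫⁻ z in {z | a z < 1}, g z =
      ∫⁻ u, g u * ENNReal.ofReal ((a u)⁻¹ ^ finrank ℝ E) ∂coneMeasure E := by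
  rw [setLIntegral_lt_one_eq_lintegral_toSphere volume hg ha hg_smul ha_smul ha_pos,
    lintegral_coneMeasure_eq_lintegral_toSphere (by fun_prop)]
  refine lintegral_congr fun u => ?_
  rw [mul_assoc, ← ENNReal.ofReal_mul' (by positivity), mul_one_div]

end ConeMeasure

section HomogeneousShift

variable {F : Type*} [NormedAddCommGroup F] [NormedSpace ℝ F]

/-- The extension of the translation `u ↦ u - x` of the unit sphere to a map of the whole space
that commutes with positive scalars. It turns integrals over the sphere seen from `x` into volume
integrals. -/
def homogeneousShift (x y : F) : F :=
  y - ‖y‖ • x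

theorem homogeneousShift_zero (x : F) : homogeneousShift x 0 = 0 := by
  rw [homogeneousShift, norm_zero, zero_smul, sub_zero]

theorem homogeneousShift_of_norm_eq_one (x : F) {u : F} (hu : ‖u‖ = 1) :
    homogeneousShift x u = u - x := by
  rw [homogeneousShift, hu, one_smul]

theorem homogeneousShift_smul (x : F) {r : ℝ} (hr : 0 < r) (y : F) :
    homogeneousShift x (r • y) = r • homogeneousShift x y := by
  rw [homogeneousShift, homogeneousShift, norm_smul, Real.norm_of_nonneg hr.le, smul_sub, smul_smul]

theorem continuous_homogeneousShift (x : F) : Continuous (homogeneousShift x) := by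
  unfold homogeneousShift
  fun_prop

theorem approximatesLinearOn_homogeneousShift (x : F) :
    ApproximatesLinearOn (homogeneousShift x) (ContinuousLinearEquiv.refl ℝ F : F →L[ℝ] F) univ
      ‖x‖₊ := by
  intro y _ z _
  calc ‖homogeneousShift x y - homogeneousShift x z - (y - z)‖
      = ‖(‖z‖ - ‖y‖) • x‖ := by
        congr 1
        simp only [homogeneousShift, sub_smul]
        abel
    _ = |‖y‖ - ‖z‖| * ‖x‖ := by rw [norm_smul, Real.norm_eq_abs, abs_sub_comm]
    _ ≤ ‖x‖ * ‖y - z‖ := by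
        rw [mul_comm]
        gcongr
        exact abs_norm_sub_norm_le y z

theorem bijective_homogeneousShift [CompleteSpace F] {x : F} (hx : ‖x‖ < 1) :
    Function.Bijective (homogeneousShift x) := by
  have happrox := approximatesLinearOn_homogeneousShift x
  rcases subsingleton_or_nontrivial F with hF | hF
  · exact ⟨injOn_univ.1 (happrox.injOn (Or.inl hF)), happrox.surjective (Or.inl hF)⟩
  · have hlt : ‖x‖₊ < ‖((ContinuousLinearEquiv.refl ℝ F).symm : F →L[ℝ] F)‖₊⁻¹ := by
      rw [ContinuousLinearEquiv.refl_symm, ContinuousLinearEquiv.coe_refl,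
        ContinuousLinearMap.nnnorm_id, inv_one]
      exact hx
    exact ⟨injOn_univ.1 (happrox.injOn (Or.inr hlt)), happrox.surjective (Or.inr hlt)⟩

theorem hasFDerivAt_norm {y : E} (hy : y ≠ 0) :
    HasFDerivAt (fun z : E => ‖z‖) (innerSL ℝ (normalize y)) y := by
  have hnorm : ‖y‖ ≠ 0 := norm_ne_zero_iff.2 hy
  have hsqrt := (hasStrictFDerivAt_norm_sq y).hasFDerivAt.sqrt (pow_ne_zero 2 hnorm)
  simp only [Real.sqrt_sq (norm_nonneg _)] at hsqrt
  refine hsqrt.congr_fderiv ?_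
  ext z
  simp only [NormedSpace.normalize, smul_apply, innerSL_apply_apply, map_smul, smul_eq_mul,
    nsmul_eq_mul]
  field_simp
  norm_num

theorem hasFDerivAt_homogeneousShift (x : E) {y : E} (hy : y ≠ 0) :
    HasFDerivAt (homogeneousShift x)
      (ContinuousLinearMap.id ℝ E - (innerSL ℝ (normalize y)).smulRight x) y :=
  (hasFDerivAt_id y).sub ((hasFDerivAt_norm hy).smul_const x)

theorem det_id_sub_smulRight [FiniteDimensional ℝ F] (f : F →L[ℝ] ℝ) (x : F) :
    (ContinuousLinearMap.id ℝ F - f.smulRight x).det = 1 - f x := by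
  have htransvection : ((ContinuousLinearMap.id ℝ F - f.smulRight x : F →L[ℝ] F) : F →ₗ[ℝ] F) =
      LinearMap.transvection (f : F →ₗ[ℝ] ℝ) (-x) := by
    ext z
    simp [LinearMap.transvection.apply, sub_eq_add_neg]
  rw [ContinuousLinearMap.det, htransvection, LinearMap.transvection.det,
    ContinuousLinearMap.coe_coe, map_neg, sub_eq_add_neg]

theorem real_inner_lt_one {x u : E} (hx : ‖x‖ < 1) (hu : ‖u‖ = 1) : ⟪x, u⟫ < 1 := by
  refine (real_inner_le_norm x u).trans_lt ?_
  rwa [hu, mul_one]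

variable [MeasurableSpace E] [BorelSpace E] [FiniteDimensional ℝ E] [Nontrivial E]

theorem setLIntegral_preimage_homogeneousShift {x : E} (hx : ‖x‖ < 1) {s : Set E}
    (hs : MeasurableSet s) (ψ : E → ℝ≥0∞) :
    ∫⁻ y in homogeneousShift x ⁻¹' s,
        ENNReal.ofReal (1 - ⟪x, normalize y⟫) * ψ (homogeneousShift x y) =
      ∫⁻ z in s, ψ z := by
  have hbij := bijective_homogeneousShift hx
  have hmeas : MeasurableSet (homogeneousShift x ⁻¹' s) :=
    (continuous_homogeneousShift x).measurable hs
  have himage : homogeneousShift x '' (homogeneousShift x ⁻¹' s \ {0}) = s \ {0} := by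
    rw [image_sdiff hbij.injective, image_preimage_eq s hbij.surjective, image_singleton,
      homogeneousShift_zero]
  have hchange := lintegral_image_eq_lintegral_abs_det_fderiv_mul volume
    (hmeas.diff (measurableSet_singleton 0))
    (fun y hy => (hasFDerivAt_homogeneousShift x hy.2).hasFDerivWithinAt) hbij.injective.injOn ψ
  rw [himage] at hchange
  have hpuncture : ∀ t : Set E, volume.restrict (t \ {0}) = volume.restrict t := fun t =>
    Measure.restrict_congr_set (sdiff_null_ae_eq_self (measure_singleton 0))
  rw [← hpuncture s, hchange, ← hpuncture (homogeneousShift x ⁻¹' s)]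
  refine setLIntegral_congr_fun (hmeas.diff (measurableSet_singleton 0)) fun y hy => ?_
  have hpos : 0 ≤ 1 - ⟪x, NormedSpace.normalize y⟫ :=
    sub_nonneg.2 (real_inner_lt_one hx (norm_normalize_eq_one_iff.2 hy.2)).le
  rw [det_id_sub_smulRight, innerSL_apply_apply, real_inner_comm x, abs_of_nonneg hpos]

end HomogeneousShift

section CentralProjection

variable [MeasurableSpace E] [BorelSpace E] [FiniteDimensional ℝ E] [Nontrivial E] {x : E}

theorem lintegral_coneMeasure_normalize_sub (hx : ‖x‖ < 1) {φ : E → ℝ≥0∞} (hφ : Measurable φ) :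
    ∫⁻ u, ENNReal.ofReal ((1 - ⟪x, u⟫) * ‖u - x‖⁻¹ ^ finrank ℝ E) * φ (normalize (u - x))
        ∂coneMeasure E =
      ∫⁻ u, φ u ∂coneMeasure E := by
  have hshift := (continuous_homogeneousShift x).measurable
  have hnormalize := measurable_normalize (E := E)
  rw [lintegral_coneMeasure hφ, ← setLIntegral_preimage_homogeneousShift hx
    (measurableSet_lt measurable_norm measurable_const)]
  change _ = ∫⁻ y in {y | ‖homogeneousShift x y‖ < 1}, _
  rw [setLIntegral_lt_one_eq_lintegral_coneMeasure (by fun_prop) hshift.norm]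
  · refine lintegral_congr_ae (ae_norm_eq_one_coneMeasure.mono fun u hu => ?_)
    have hpos : 0 ≤ 1 - ⟪x, u⟫ := sub_nonneg.2 (real_inner_lt_one hx hu).le
    simp only [normalize_eq_self_of_norm_eq_one hu, homogeneousShift_of_norm_eq_one x hu]
    rw [ENNReal.ofReal_mul hpos, mul_right_comm]
  · intro r hr z
    rw [homogeneousShift_smul x hr, normalize_smul_of_pos hr, normalize_smul_of_pos hr]
  · intro r hr z
    rw [homogeneousShift_smul x hr, norm_smul, Real.norm_of_nonneg hr.le]
  · intro z hz
    rw [norm_pos_iff, ← homogeneousShift_zero x]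
    exact (bijective_homogeneousShift hx).injective.ne hz

theorem map_normalize_sub_withDensity_coneMeasure (hx : ‖x‖ < 1) :
    ((coneMeasure E).withDensity fun u =>
        ENNReal.ofReal ((1 - ⟪x, u⟫) * ‖u - x‖⁻¹ ^ finrank ℝ E)).map
      (fun u => normalize (u - x)) = coneMeasure E := by
  have hproj : Measurable fun u : E => normalize (u - x) :=
    measurable_normalize.comp (measurable_id.sub_const x)
  refine Measure.ext_of_lintegral _ fun φ hφ => ?_
  rw [lintegral_map hφ hproj, lintegral_withDensity_eq_lintegral_mul _ (by fun_prop)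
    (g := fun u => φ (NormedSpace.normalize (u - x))) (hφ.comp hproj)]
  exact lintegral_coneMeasure_normalize_sub hx hφ

theorem integral_coneMeasure_normalize_sub (hx : ‖x‖ < 1) {f : E → ℝ} (hf : Measurable f) :
    ∫ u, ((1 - ⟪x, u⟫) * ‖u - x‖⁻¹ ^ finrank ℝ E) * f (normalize (u - x)) ∂coneMeasure E =
      ∫ u, f u ∂coneMeasure E := by
  have hproj : Measurable fun u : E => normalize (u - x) :=
    measurable_normalize.comp (measurable_id.sub_const x)
  conv_rhs => rw [← map_normalize_sub_withDensity_coneMeasure hx]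
  rw [integral_map hproj.aemeasurable hf.aestronglyMeasurable,
    integral_withDensity_eq_integral_toReal_smul (by fun_prop)
      (.of_forall fun _ => ENNReal.ofReal_lt_top)]
  refine integral_congr_ae (ae_norm_eq_one_coneMeasure.mono fun u hu => ?_)
  have hpos : 0 ≤ 1 - ⟪x, u⟫ := sub_nonneg.2 (real_inner_lt_one hx hu).le
  beta_reduce
  rw [ENNReal.toReal_ofReal (by positivity), smul_eq_mul]

end CentralProjection

section Chord

variable {x θ : E} {t : ℝ}

/-- Half the length of the chord that the line through `x` in the direction `θ` cuts out of the
unit sphere, for a unit vector `θ`. -/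
def halfChord (x θ : E) : ℝ :=
  √(⟪x, θ⟫ ^ 2 + (1 - ‖x‖ ^ 2))

/-- The part of `⟪e, u⟫ / ⟪u, θ⟫` that is even in `θ`, where `u` is the point of the unit sphere
that is seen from `x` in the direction `θ`; the odd part is `⟪e, θ⟫`. -/
def chordWeight (x e θ : E) : ℝ :=
  (⟪e, x⟫ - ⟪x, θ⟫ * ⟪e, θ⟫) / halfChord x θ

theorem halfChord_pos (hx : ‖x‖ < 1) (θ : E) : 0 < halfChord x θ := by
  have hpos : 0 < 1 - ‖x‖ ^ 2 := sub_pos.2 (pow_lt_one₀ (norm_nonneg x) hx two_ne_zero)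
  unfold halfChord
  positivity

theorem continuous_halfChord (x : E) : Continuous (halfChord x) := by
  unfold halfChord
  fun_prop

theorem halfChord_eq_inner_add (hx : ‖x‖ < 1) (hθ : ‖θ‖ = 1) (ht : 0 < t)
    (hu : ‖x + t • θ‖ = 1) : halfChord x θ = ⟪x, θ⟫ + t := by
  have hpos : 0 < 1 - ‖x‖ ^ 2 := sub_pos.2 (pow_lt_one₀ (norm_nonneg x) hx two_ne_zero)
  have hsq : 1 - ‖x‖ ^ 2 = t * (2 * ⟪x, θ⟫ + t) := by
    have hexpand := norm_add_sq_real x (t • θ)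
    rw [hu, norm_smul, hθ, inner_smul_right, mul_one, Real.norm_eq_abs, sq_abs] at hexpand
    linarith
  have hfactor : 0 < 2 * ⟪x, θ⟫ + t := pos_of_mul_pos_right (hsq ▸ hpos) ht.le
  rw [halfChord, hsq, ← Real.sqrt_sq (by linarith : 0 ≤ ⟪x, θ⟫ + t)]
  ring_nf

theorem chordWeight_neg (x e θ : E) : chordWeight x e (-θ) = chordWeight x e θ := by
  simp only [chordWeight, halfChord, inner_neg_right, neg_sq, neg_mul_neg]

theorem continuous_chordWeight (hx : ‖x‖ < 1) (e : E) : Continuous (chordWeight x e) := by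
  have hchord := continuous_halfChord x
  unfold chordWeight
  exact Continuous.div (by fun_prop) hchord fun θ => (halfChord_pos hx θ).ne'

theorem one_sub_inner_mul_chordWeight_add_inner (hx : ‖x‖ < 1) (hθ : ‖θ‖ = 1) (ht : 0 < t)
    (hu : ‖x + t • θ‖ = 1) (e : E) :
    (1 - ⟪x, x + t • θ⟫) * (chordWeight x e θ + ⟪e, θ⟫) = t * ⟪e, x + t • θ⟫ := by
  have hchord := halfChord_eq_inner_add hx hθ ht hu
  have hsq : halfChord x θ ^ 2 = ⟪x, θ⟫ ^ 2 + (1 - ‖x‖ ^ 2) :=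
    Real.sq_sqrt (Real.sqrt_pos.1 (halfChord_pos hx θ)).le
  have hcos : 1 - ⟪x, x + t • θ⟫ = t * halfChord x θ := by
    rw [inner_add_right, inner_smul_right, real_inner_self_eq_norm_sq]
    rw [hchord] at hsq ⊢
    linarith
  have hinner : halfChord x θ * (chordWeight x e θ + ⟪e, θ⟫) = ⟪e, x + t • θ⟫ := by
    rw [mul_add, chordWeight, mul_div_cancel₀ _ (halfChord_pos hx θ).ne', hchord,
      inner_add_right, inner_smul_right]
    ring
  rw [hcos, mul_assoc, hinner]

end Chord

section OddCriticalKernel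

/-- A kernel on `E` as in the theory of singular integrals, but homogeneous of the critical degree
`1 - dim E` of a hypersurface: it is odd, and continuous away from the origin. The value at `0` is
unconstrained. -/
structure IsOddCriticalKernel (K : E → ℝ) : Prop where
  continuousOn : ContinuousOn K {0}ᶜ
  odd : ∀ z ≠ 0, K (-z) = -K z
  homogeneous : ∀ r : ℝ, 0 < r → ∀ z ≠ 0, K (r • z) = r ^ (1 - (finrank ℝ E : ℝ)) * K z

namespace IsOddCriticalKernel

variable {K : E → ℝ} {x : E}

theorem comp_smul (hK : IsOddCriticalKernel K) {R : ℝ} (hR : R ≠ 0) :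
    IsOddCriticalKernel fun z => K (R • z) where
  continuousOn := hK.continuousOn.comp (continuous_const_smul R).continuousOn
    fun _ hz => smul_ne_zero hR hz
  odd z hz := by rw [smul_neg, hK.odd _ (smul_ne_zero hR hz)]
  homogeneous r hr z hz := by rw [smul_comm, hK.homogeneous r hr _ (smul_ne_zero hR hz)]

theorem eq_norm_mul_apply_normalize (hK : IsOddCriticalKernel K) {z : E} (hz : z ≠ 0) :
    K z = ‖z‖ * ‖z‖⁻¹ ^ finrank ℝ E * K (normalize z) := by
  have hpos : 0 < ‖z‖ := norm_pos_iff.2 hz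
  conv_lhs => rw [← norm_smul_normalize z]
  rw [hK.homogeneous _ hpos _ ((normalize_eq_zero_iff z).not.2 hz), sub_eq_add_neg,
    Real.rpow_add hpos, Real.rpow_one, Real.rpow_neg hpos.le, Real.rpow_natCast, inv_pow]

theorem sub_mul_inner_eq (hK : IsOddCriticalKernel K) (hx : ‖x‖ < 1) {u : E} (hu : ‖u‖ = 1)
    (e : E) :
    K (u - x) * ⟪e, u⟫ = (1 - ⟪x, u⟫) * ‖u - x‖⁻¹ ^ finrank ℝ E *
      (K (normalize (u - x)) *
        (chordWeight x e (normalize (u - x)) + ⟪e, normalize (u - x)⟫)) := by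
  have hne : u - x ≠ 0 := sub_ne_zero.2 (ne_of_apply_ne norm (hu.trans_ne hx.ne'))
  have hray : x + ‖u - x‖ • NormedSpace.normalize (u - x) = u := by
    rw [norm_smul_normalize, add_sub_cancel]
  have hchord := one_sub_inner_mul_chordWeight_add_inner hx (norm_normalize_eq_one_iff.2 hne)
    (norm_pos_iff.2 hne) (hray.symm ▸ hu) e
  rw [hray] at hchord
  rw [hK.eq_norm_mul_apply_normalize hne]
  linear_combination -(‖u - x‖⁻¹ ^ finrank ℝ E * K (NormedSpace.normalize (u - x))) * hchord

end IsOddCriticalKernel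

variable [MeasurableSpace E] [BorelSpace E] [FiniteDimensional ℝ E] [Nontrivial E]

theorem integrable_coneMeasure_of_continuousOn {f : E → ℝ} (hf : ContinuousOn f {0}ᶜ) :
    Integrable f (coneMeasure E) := by
  have hsphere : sphere (0 : E) 1 ⊆ {0}ᶜ := fun u hu => ne_zero_of_mem_unit_sphere ⟨u, hu⟩
  obtain ⟨C, hC⟩ := (isCompact_sphere (0 : E) 1).exists_bound_of_continuousOn (hf.mono hsphere)
  exact Integrable.of_bound (measurable_of_continuousOn_compl_singleton 0 hf).aestronglyMeasurable
    C (ae_norm_eq_one_coneMeasure.mono fun u hu => hC u (mem_sphere_zero_iff_norm.2 hu))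

theorem exists_hausdorffMeasure_restrict_sphere_eq_smul_map_coneMeasure {R : ℝ} (hR : 0 < R) :
    ∃ C : ℝ≥0∞, μH[(finrank ℝ E : ℝ) - 1].restrict (sphere (0 : E) R) =
      C • (coneMeasure E).map (R • ·) := by
  have hscale : Measurable fun y : E => R • y := measurable_const_smul R
  have : Fact (μH[(finrank ℝ E : ℝ) - 1] (sphere (0 : E) R) < ∞) :=
    ⟨hausdorffMeasure_sphere_lt_top R⟩
  have hnorm : ∀ᵐ y ∂(coneMeasure E).map (R • ·), ‖y‖ = R := by
    rw [ae_map_iff hscale.aemeasurable (measurableSet_eq_fun measurable_norm measurable_const)]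
    refine ae_norm_eq_one_coneMeasure.mono fun u hu => ?_
    rw [norm_smul, hu, mul_one, Real.norm_of_nonneg hR.le]
  have huniv : (coneMeasure E).map (R • ·) univ ≠ 0 := by
    rw [Measure.map_apply hscale .univ, preimage_univ]
    exact coneMeasure_univ_ne_zero
  exact (isRotationInvariant_hausdorffMeasure_restrict_sphere _ R).exists_eq_smul
    (isRotationInvariant_coneMeasure.map_smul R) hR
    ((ae_restrict_mem isClosed_sphere.measurableSet).mono fun y => mem_sphere_zero_iff_norm.1)
    hnorm huniv

namespace IsOddCriticalKernel

variable {K : E → ℝ} {x : E} {R : ℝ}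

theorem integral_coneMeasure_sub_mul_inner (hK : IsOddCriticalKernel K) (hx : ‖x‖ < 1) (e : E) :
    ∫ u, K (u - x) * ⟪e, u⟫ ∂coneMeasure E = ∫ u, K u * ⟪e, u⟫ ∂coneMeasure E := by
  have hweight := continuous_chordWeight hx e
  have heven : ContinuousOn (fun u => K u * chordWeight x e u) {0}ᶜ :=
    hK.continuousOn.mul hweight.continuousOn
  have hinner : ContinuousOn (fun u => K u * ⟪e, u⟫) {0}ᶜ := hK.continuousOn.mul (by fun_prop)
  have hmeas : Measurable fun u => K u * (chordWeight x e u + ⟪e, u⟫) :=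
    (measurable_of_continuousOn_compl_singleton 0 hK.continuousOn).mul (by fun_prop)
  have hodd : ∫ u, K u * chordWeight x e u ∂coneMeasure E = 0 :=
    isRotationInvariant_coneMeasure.integral_eq_zero_of_odd <|
      ae_norm_eq_one_coneMeasure.mono fun u hu => by
        rw [hK.odd u (norm_ne_zero_iff.1 (hu.trans_ne one_ne_zero)), chordWeight_neg, neg_mul]
  calc ∫ u, K (u - x) * ⟪e, u⟫ ∂coneMeasure E
      = ∫ u, K u * (chordWeight x e u + ⟪e, u⟫) ∂coneMeasure E := by
        rw [← integral_coneMeasure_normalize_sub hx hmeas]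
        exact integral_congr_ae
          (ae_norm_eq_one_coneMeasure.mono fun u hu => hK.sub_mul_inner_eq hx hu e)
    _ = ∫ u, K u * ⟪e, u⟫ ∂coneMeasure E := by
        simp only [mul_add]
        rw [integral_add (integrable_coneMeasure_of_continuousOn heven)
          (integrable_coneMeasure_of_continuousOn hinner), hodd, zero_add]

theorem setIntegral_sphere_sub_mul_inner (hK : IsOddCriticalKernel K) (hx : x ∈ ball 0 R)
    (e : E) :
    ∫ y in sphere 0 R, K (y - x) * ⟪e, y⟫ ∂μH[(finrank ℝ E : ℝ) - 1] =
      ∫ y in sphere 0 R, K y * ⟪e, y⟫ ∂μH[(finrank ℝ E : ℝ) - 1] := by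
  have hxR : ‖x‖ < R := mem_ball_zero_iff.1 hx
  have hR : 0 < R := (norm_nonneg x).trans_lt hxR
  have hx1 : ‖R⁻¹ • x‖ < 1 := by
    rw [norm_smul, norm_inv, Real.norm_of_nonneg hR.le]
    exact (inv_mul_lt_one₀ hR).2 hxR
  obtain ⟨C, hC⟩ := exists_hausdorffMeasure_restrict_sphere_eq_smul_map_coneMeasure (E := E) hR
  have hscale : MeasurableEmbedding fun y : E => R • y :=
    (Homeomorph.smulOfNeZero R hR.ne').measurableEmbedding
  have hkey := (hK.comp_smul hR.ne').integral_coneMeasure_sub_mul_inner hx1 (R • e)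
  simp only [smul_sub, smul_inv_smul₀ hR.ne', real_inner_smul_left] at hkey
  rw [hC, integral_smul_measure, integral_smul_measure, hscale.integral_map, hscale.integral_map]
  simp only [inner_smul_right, hkey]

end IsOddCriticalKernel

end OddCriticalKernel

section Homogeneity

variable {f P : E → ℝ} {k : ℕ}

theorem iteratedFDeriv_comp_smul {F G : Type*} [NormedAddCommGroup F] [NormedSpace ℝ F]
    [NormedAddCommGroup G] [NormedSpace ℝ G] (g : F → G) (m : ℕ) {c : ℝ} (hc : c ≠ 0) (z : F) :
    iteratedFDeriv ℝ m (fun y => g (c • y)) z = c ^ m • iteratedFDeriv ℝ m g (c • z) := by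
  let scale : F ≃L[ℝ] F := ContinuousLinearEquiv.smulLeft (Units.mk0 c hc)
  have hcomp := scale.iteratedFDerivWithin_comp_right g uniqueDiffOn_univ (mem_univ (scale z)) m
  rw [preimage_univ, iteratedFDerivWithin_univ, iteratedFDerivWithin_univ] at hcomp
  refine hcomp.trans (ContinuousMultilinearMap.ext fun w => ?_)
  exact ((iteratedFDeriv ℝ m g (c • z)).map_smul_univ (fun _ => c) w).trans (by simp)

theorem isOddCriticalKernel_iteratedFDeriv_mul
    (hf : ContDiffOn ℝ (k + 1) f {0}ᶜ)
    (hf_smul : ∀ c : ℝ, c ≠ 0 → ∀ z, f (c • z) = |c| ^ (2 - (finrank ℝ E : ℝ)) * f z)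
    (hP : Continuous P) (hP_smul : ∀ (c : ℝ) z, P (c • z) = c ^ k * P z) (w : Fin (k + 1) → E) :
    IsOddCriticalKernel fun z => iteratedFDeriv ℝ (k + 1) f (-z) w * P z := by
  have hf_at (z : E) (hz : z ≠ 0) : ContDiffAt ℝ (k + 1 : ℕ) f (-z) := by
    exact_mod_cast hf.contDiffAt (isOpen_compl_singleton.mem_nhds (neg_ne_zero.2 hz))
  have hscale (c : ℝ) (hc : c ≠ 0) (z : E) (hz : z ≠ 0) :
      iteratedFDeriv ℝ (k + 1) f (-(c • z)) w * P (c • z) =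
        c⁻¹ * |c| ^ (2 - (finrank ℝ E : ℝ)) * (iteratedFDeriv ℝ (k + 1) f (-z) w * P z) := by
    have hderiv := congrArg (· w) (iteratedFDeriv_comp_smul f (k + 1) hc (-z))
    have hfun : (fun y => f (c • y)) = |c| ^ (2 - (finrank ℝ E : ℝ)) • f :=
      funext (hf_smul c hc)
    rw [hfun, iteratedFDeriv_const_smul_apply (hf_at z hz)] at hderiv
    simp only [smul_apply, smul_eq_mul, smul_neg, pow_succ] at hderiv
    rw [hP_smul]
    field_simp
    linear_combination -P z * hderiv
  refine ⟨fun z hz => ContinuousAt.continuousWithinAt ?_, fun z hz => ?_, fun r hr z hz => ?_⟩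
  · have hcont := ((hf_at z hz).continuousAt_iteratedFDeriv le_rfl).comp
      continuous_neg.continuousAt
    exact ((ContinuousMultilinearMap.apply ℝ (fun _ => E) ℝ w).continuous.continuousAt.comp
      hcont).mul hP.continuousAt
  · simpa using hscale (-1) (by norm_num) z hz
  · have hexp : 1 - (finrank ℝ E : ℝ) = -1 + (2 - finrank ℝ E) := by ring
    rw [hscale r hr.ne' z hz, abs_of_pos hr, hexp, Real.rpow_add hr, Real.rpow_neg_one]

variable [MeasurableSpace E] [BorelSpace E] [FiniteDimensional ℝ E] [Nontrivial E]

theorem stmt_17_general (hf : ContDiffOn ℝ (k + 1) f {0}ᶜ)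
    (hf_smul : ∀ c : ℝ, c ≠ 0 → ∀ z, f (c • z) = |c| ^ (2 - (finrank ℝ E : ℝ)) * f z)
    (hP : Continuous P) (hP_smul : ∀ (c : ℝ) z, P (c • z) = c ^ k * P z) (w : Fin (k + 1) → E)
    (e : E) (R : ℝ) :
    ∃ c : ℝ, ∀ x ∈ ball (0 : E) R,
      ∫ y in sphere (0 : E) R, iteratedFDeriv ℝ (k + 1) (fun z => f (z - y)) x w * P (y - x) *
        ⟪e, y⟫ ∂μH[(finrank ℝ E : ℝ) - 1] = c := by
  have hK := isOddCriticalKernel_iteratedFDeriv_mul hf hf_smul hP hP_smul w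
  refine ⟨_, fun x hx => Eq.trans ?_ (hK.setIntegral_sphere_sub_mul_inner hx e)⟩
  simp only [iteratedFDeriv_comp_sub, neg_sub]

end Homogeneity

section FundamentalSolution

variable {n : ℕ}

theorem fundSol_smul (c : ℝ) (z : EuclideanSpace ℝ (Fin n)) :
    fundSol n (c • z) = |c| ^ (2 - (n : ℝ)) * fundSol n z := by
  unfold fundSol
  rw [norm_smul, Real.norm_eq_abs, Real.mul_rpow (abs_nonneg c) (norm_nonneg z)]
  ring

theorem contDiffOn_fundSol {m : WithTop ℕ∞} : ContDiffOn ℝ m (fundSol n) {0}ᶜ := fun _ hz =>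
  (contDiffAt_const.mul ((contDiffAt_norm ℝ hz).rpow_const_of_ne
    (norm_ne_zero_iff.2 hz))).contDiffWithinAt

theorem prod_smul_apply_pow (μ : Fin n → ℕ) (c : ℝ) (z : EuclideanSpace ℝ (Fin n)) :
    ∏ i, (c • z) i ^ μ i = c ^ (∑ i, μ i) * ∏ i, z i ^ μ i := by
  simp only [PiLp.smul_apply, smul_eq_mul, mul_pow, Finset.prod_mul_distrib,
    Finset.prod_pow_eq_pow_sum]

theorem inner_inv_smul_ee (j : Fin n) (R : ℝ) (y : EuclideanSpace ℝ (Fin n)) :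
    ⟪R⁻¹ • ee j, y⟫ = y j / R := by
  rw [real_inner_smul_left, ee, EuclideanSpace.inner_single_left, map_one, one_mul,
    inv_mul_eq_div]

end FundamentalSolution

end

theorem stmt_17 (n m : ℕ) (hn : 3 ≤ n) (μ : Fin n → ℕ) (hm : m = (∑ i, μ i) + 1)
    (j : Fin n) (R : ℝ) (hR : 0 < R) (v : Fin m → Fin n) :
    ∃ c : ℝ, ∀ x ∈ ball (0 : EuclideanSpace ℝ (Fin n)) R,
      (∫ y in sphere (0 : EuclideanSpace ℝ (Fin n)) R,
          (iteratedFDeriv ℝ m (fun z => fundSol n (z - y)) x fun i => ee (v i)) *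
            (∏ i, (y i - x i) ^ μ i) * (y j / R) ∂μH[(n : ℝ) - 1]) = c := by
  subst hm
  have : Nonempty (Fin n) := ⟨j⟩
  simpa only [finrank_euclideanSpace_fin, inner_inv_smul_ee, PiLp.sub_apply] using
    stmt_17_general (P := fun z => ∏ i, z i ^ μ i) contDiffOn_fundSol
      (by simpa only [finrank_euclideanSpace_fin] using fun c _ => fundSol_smul c) (by fun_prop)
      (prod_smul_apply_pow μ) (fun i => ee (v i)) (R⁻¹ • ee j) R
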